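/- For every n ≥ 12, the complement of the cycle C_n on n vertices satisfies γ_MR(C̄_n) = −1. -/

import Mathlib

open Finset

namespace MRD

variable {V : Type*}

open scoped Classical

/-- Sum of `f` over the closed neighborhood of `v` in `G`:
`f(N[v]) = \sum_{u \in N[v]} f(u)`. -/
noncomputable def closedNbhdSum [Fintype V] (G : SimpleGraph V) (f : V → ℤ) (v : V) : ℤ :=
  ∑ u ∈ Finset.univ.filter (fun u => G.Adj v u ∨ u = v), f u

/-- `f : V → {-1, 1, 2}` is a Majority Roman Dominating Function (MRDF) on `G`:
(i) `f(N[v]) ≥ 1` for at least half of the vertices, and (ii) every vertex with value `-1`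
is adjacent to a vertex with value `2`. -/
noncomputable def IsMRDF [Fintype V] (G : SimpleGraph V) (f : V → ℤ) : Prop :=
  (∀ v, f v = -1 ∨ f v = 1 ∨ f v = 2) ∧
  Fintype.card V ≤ 2 * (Finset.univ.filter (fun v => 1 ≤ closedNbhdSum G f v)).card ∧
  (∀ u, f u = -1 → ∃ w, G.Adj u w ∧ f w = 2)

/-- The majority Roman domination number `γ_MR(G)`: the minimum weight
`w(f) = ∑_v f(v)` over all MRDFs `f` on `G`. -/
noncomputable def mrdNum [Fintype V] (G : SimpleGraph V) : ℤ :=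
  sInf {w : ℤ | ∃ f : V → ℤ, IsMRDF G f ∧ w = ∑ v, f v}

/-- The join `G ∨ H` of two simple graphs: disjoint union plus all edges between the parts. -/
def join {α β : Type*} (G : SimpleGraph α) (H : SimpleGraph β) : SimpleGraph (α ⊕ β) where
  Adj x y :=
    match x, y with
    | .inl a, .inl b => G.Adj a b
    | .inr a, .inr b => H.Adj a b
    | .inl _, .inr _ => True
    | .inr _, .inl _ => True
  symm := by refine ⟨?_⟩; rintro (a | a) (b | b) h <;> simp_all [SimpleGraph.adj_comm]
  loopless := by refine ⟨?_⟩; rintro (a | a) h <;> simp_all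

/-- The corona `G ∘ H` of two simple graphs: one copy of `G` and `|V(G)|` copies of `H`,
where the `v`-th vertex of `G` is joined to every vertex of the `v`-th copy of `H`. -/
def corona {α β : Type*} (G : SimpleGraph α) (H : SimpleGraph β) : SimpleGraph (α ⊕ α × β) where
  Adj x y :=
    match x, y with
    | .inl u, .inl v => G.Adj u v
    | .inr p, .inr q => p.1 = q.1 ∧ H.Adj p.2 q.2
    | .inl u, .inr p => u = p.1
    | .inr p, .inl u => u = p.1
  symm := by
    refine ⟨?_⟩; rintro (u | ⟨u, x⟩) (v | ⟨v, y⟩) h <;> simp_all [SimpleGraph.adj_comm, eq_comm]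
  loopless := by refine ⟨?_⟩; rintro (u | ⟨u, x⟩) h <;> simp_all

/-- `S` is a dominating set of `G`. -/
def IsDomSet (G : SimpleGraph V) (S : Finset V) : Prop :=
  ∀ v, v ∉ S → ∃ u ∈ S, G.Adj v u

/-- The domination number `γ(G)`. -/
noncomputable def domNum [Fintype V] (G : SimpleGraph V) : ℕ :=
  sInf {k | ∃ S : Finset V, IsDomSet G S ∧ S.card = k}

/-- A set of vertices is independent if no two of its vertices are adjacent. -/
def IsIndepSet (G : SimpleGraph V) (S : Finset V) : Prop :=
  ∀ a ∈ S, ∀ b ∈ S, ¬ G.Adj a b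

/-- The independence number `β₀(G)`. -/
noncomputable def indepNum [Fintype V] (G : SimpleGraph V) : ℕ :=
  sSup {k | ∃ S : Finset V, IsIndepSet G S ∧ S.card = k}

/-- The cocktail party graph `K_{2n} - M` (complete graph minus a perfect matching),
realized on `Fin n × Fin 2`: `(i,a)` and `(j,b)` are adjacent iff `i ≠ j`. -/
def cocktail (n : ℕ) : SimpleGraph (Fin n × Fin 2) where
  Adj x y := x.1 ≠ y.1
  symm := ⟨fun _ _ h => h.symm⟩
  loopless := ⟨fun _ h => h rfl⟩

end MRD

namespace MRD
open scoped Classical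

lemma cyc_card (n : ℕ) (hn : 3 ≤ n) (v : Fin n) :
    (Finset.univ.filter (fun u => (SimpleGraph.cycleGraph n).Adj v u)).card = 2 := by
  obtain ⟨k, rfl⟩ : ∃ k, n = k + 3 := ⟨n - 3, by omega⟩
  have h := SimpleGraph.cycleGraph_degree_three_le (n := k) (v := v)
  rw [← SimpleGraph.card_neighborFinset_eq_degree, SimpleGraph.neighborFinset_eq_filter] at h
  convert h using 2

lemma cyc_adj (n : ℕ) (u v : Fin n) (h : (SimpleGraph.cycleGraph n).Adj u v) :
    u.val = v.val + 1 ∨ v.val = u.val + 1 ∨ (u.val = 0 ∧ v.val + 1 = n) ∨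
      (v.val = 0 ∧ u.val + 1 = n) := by
  rw [SimpleGraph.cycleGraph_adj'] at h
  have hu := u.isLt
  have hv := v.isLt
  rcases h with h | h
  · rcases le_or_gt v u with h1 | h1
    · rw [Fin.sub_val_of_le h1] at h
      omega
    · rw [Fin.coe_sub_iff_lt.2 h1] at h
      have : u.val < v.val := h1
      omega
  · rcases le_or_gt u v with h1 | h1
    · rw [Fin.sub_val_of_le h1] at h
      omega
    · rw [Fin.coe_sub_iff_lt.2 h1] at h
      have : v.val < u.val := h1
      omega

lemma nbhd_sum (n : ℕ) (f : Fin n → ℤ) (v : Fin n) :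
    closedNbhdSum (SimpleGraph.cycleGraph n)ᶜ f v =
      ∑ u, f u - ∑ u ∈ Finset.univ.filter (fun u => (SimpleGraph.cycleGraph n).Adj v u), f u := by
  unfold closedNbhdSum
  rw [eq_sub_iff_add_eq, add_comm,
    ← Finset.sum_filter_add_sum_filter_not Finset.univ
      (fun u => (SimpleGraph.cycleGraph n).Adj v u) f]
  congr 2
  ext u
  simp only [Finset.mem_filter, Finset.mem_univ, true_and, SimpleGraph.compl_adj]
  constructor
  · rintro (h | rfl)
    · exact h.2
    · exact SimpleGraph.irrefl _
  · intro h
    by_cases e : u = v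
    · exact Or.inr e
    · exact Or.inl ⟨fun h' => e h'.symm, h⟩

lemma lower (n : ℕ) (hn : 12 ≤ n) (f : Fin n → ℤ)
    (hf : IsMRDF (SimpleGraph.cycleGraph n)ᶜ f) : -1 ≤ ∑ v, f v := by
  obtain ⟨h1, h2, -⟩ := hf
  rw [Fintype.card_fin] at h2
  have : 0 < (Finset.univ.filter
    (fun v => 1 ≤ closedNbhdSum (SimpleGraph.cycleGraph n)ᶜ f v)).card := by omega
  obtain ⟨v, hv⟩ := Finset.card_pos.1 this
  have hv := (Finset.mem_filter.1 hv).2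
  rw [nbhd_sum] at hv
  have h3 := Finset.card_nsmul_le_sum
    (Finset.univ.filter (fun u => (SimpleGraph.cycleGraph n).Adj v u)) f (-1)
    (fun u _ => by rcases h1 u with h | h | h <;> omega)
  rw [cyc_card n (by omega) v] at h3
  simp only [nsmul_eq_mul] at h3
  push_cast at h3
  linarith

lemma count_lt (n k : ℕ) (h : k ≤ n) :
    (∑ v : Fin n, if v.val < k then (1 : ℤ) else 0) = k := by
  rw [Fin.sum_univ_eq_sum_range (fun i => if i < k then (1 : ℤ) else 0) n, Finset.sum_boole]
  congr 1
  have : (Finset.range n).filter (fun i => i < k) = Finset.range k := by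
    ext i
    simp only [Finset.mem_filter, Finset.mem_range]
    omega
  rw [this, Finset.card_range]

lemma upper (n m k : ℕ) (hm : 3 ≤ m) (hmk : m ≤ k) (hk : 2 * k + 4 ≤ n)
    (hn : n = m + 2 * k + 1) :
    ∃ f : Fin n → ℤ, IsMRDF (SimpleGraph.cycleGraph n)ᶜ f ∧ -1 = ∑ v, f v := by
  let f : Fin n → ℤ := fun v => if v.val < m then 2 else if v.val < k then 1 else -1
  have hf1 : ∀ v : Fin n, k ≤ v.val → f v = -1 := by
    intro v hv
    simp only [f]
    rw [if_neg (by omega), if_neg (by omega)]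
  have hsum : -1 = ∑ v, f v := by
    have : ∀ v, f v = ((if v.val < m then (1 : ℤ) else 0) +
        2 * (if v.val < k then (1 : ℤ) else 0)) - 1 := by
      intro v
      simp only [f]
      split_ifs <;> omega
    rw [Finset.sum_congr rfl (fun v _ => this v), Finset.sum_sub_distrib, Finset.sum_add_distrib,
      ← Finset.mul_sum, count_lt n m (by omega), count_lt n k (by omega)]
    simp
    omega
  refine ⟨f, ⟨?_, ?_, ?_⟩, hsum⟩
  · intro v
    simp only [f]
    split_ifs <;> simp
  · rw [Fintype.card_fin]
    have hsub : (Finset.univ.filter (fun v : Fin n => k + 1 ≤ v.val ∧ v.val < n - 1)) ⊆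
        Finset.univ.filter
          (fun v => 1 ≤ closedNbhdSum (SimpleGraph.cycleGraph n)ᶜ f v) := by
      intro v hv
      have hv := (Finset.mem_filter.1 hv).2
      refine Finset.mem_filter.2 ⟨Finset.mem_univ _, ?_⟩
      rw [nbhd_sum, ← hsum]
      have h3 := Finset.sum_le_card_nsmul
        (Finset.univ.filter (fun u => (SimpleGraph.cycleGraph n).Adj v u)) f (-1)
        (fun u hu => by
          have := cyc_adj n v u (Finset.mem_filter.1 hu).2
          exact (hf1 u (by omega)).le)
      rw [cyc_card n (by omega) v] at h3
      simp only [nsmul_eq_mul] at h3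
      push_cast at h3
      linarith
    have hcard : (Finset.univ.filter
        (fun v : Fin n => k + 1 ≤ v.val ∧ v.val < n - 1)).card = n - 1 - (k + 1) := by
      rw [← Nat.card_Ico (k + 1) (n - 1), ← Finset.card_map Fin.valEmbedding]
      refine congrArg Finset.card ?_
      ext i
      simp only [Finset.mem_map, Finset.mem_filter, Finset.mem_univ, true_and,
        Fin.valEmbedding_apply, Finset.mem_Ico]
      constructor
      · rintro ⟨a, ha, rfl⟩
        exact ha
      · intro h
        exact ⟨⟨i, by omega⟩, h, rfl⟩
    have := Finset.card_le_card hsub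
    omega
  · intro u hu
    have hu' : k ≤ u.val := by
      by_contra h
      simp only [f] at hu
      split_ifs at hu <;> omega
    refine ⟨⟨1, by omega⟩, ?_, ?_⟩
    · rw [SimpleGraph.compl_adj]
      refine ⟨fun h => ?_, fun h => ?_⟩
      · have := congrArg Fin.val h
        simp only at this
        omega
      · have := cyc_adj n _ _ h
        simp only at this
        omega
    · simp only [f]
      rw [if_pos (by omega)]

end MRD

/-- For `n ≥ 12`, the complement of the cycle on `n` vertices satisfies
`γ_MR(C̄_n) = -1`. -/
theorem mrdNum_compl_cycle (n : ℕ) (hn : 12 ≤ n) :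
    MRD.mrdNum (SimpleGraph.cycleGraph n)ᶜ = -1 := by
  unfold MRD.mrdNum
  refine IsLeast.csInf_eq ⟨?_, ?_⟩
  · obtain ⟨m, hm⟩ : ∃ m, n = 3 * m + 1 ∨ n = 3 * m + 3 ∨ n = 3 * m + 5 :=
      ⟨if n % 3 = 1 then (n - 1) / 3 else if n % 3 = 0 then (n - 3) / 3 else (n - 5) / 3, by
        split_ifs <;> omega⟩
    rcases hm with h | h | h
    · exact MRD.upper n m m (by omega) (by omega) (by omega) (by omega)
    · exact MRD.upper n m (m + 1) (by omega) (by omega) (by omega) (by omega)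
    · exact MRD.upper n m (m + 2) (by omega) (by omega) (by omega) (by omega)
  · rintro w ⟨f, hf, rfl⟩
    exact MRD.lower n hn f hf
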